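/- Let K < 0, n ≥ 2, and x_1, …, x_n ∈ ℍ^d_K, and let x̄ = (1/n)∑_{i=1}^n x_i be their Euclidean mean. Then K·⟨x̄,x̄⟩_L ≥ 1, with equality if and only if all x_i are identical; in particular ⟨x̄,x̄⟩_L < 0 and x̄_0 > 0, so x̄ is projectable onto the hyperboloid. -/

import Mathlib

/-!
For positive weights of total mass `1` and `v = ∑ᵢ wᵢ xᵢ`, bilinearity gives
`K⟨v,v⟩ - 1 = ∑ᵢ ∑ⱼ wᵢ wⱼ (K⟨xᵢ,xⱼ⟩ - 1)`, so the question is one about pairs of points: the reverse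
Cauchy–Schwarz inequality `K⟨x,y⟩ ≥ 1`, with equality only for `x = y`. It follows from a
sum-of-squares expression for `x₀ y₀ (K⟨x,y⟩ - 1)`. The Euclidean mean has all weights `1 / n`.
-/

noncomputable section

/-- Lorentzian inner product on ℝ^{d+1}: ⟨x,y⟩_L = −x₀y₀ + ∑_{i=1}^d xᵢyᵢ. -/
def lorentzInner {d : ℕ} (x y : Fin (d + 1) → ℝ) : ℝ :=
  (∑ i, x i * y i) - 2 * x 0 * y 0

/-- Membership in the Lorentz model ℍ^d_K: ⟨x,x⟩_L = 1/K and x₀ > 0. -/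
def onHyperboloid {d : ℕ} (K : ℝ) (x : Fin (d + 1) → ℝ) : Prop :=
  lorentzInner x x = 1 / K ∧ 0 < x 0

section Bilinearity

variable {d : ℕ} {ι : Type*}

lemma lorentzInner_eq_dotProduct (x y : Fin (d + 1) → ℝ) :
    lorentzInner x y = x ⬝ᵥ y - 2 * (x 0 * y 0) := by
  rw [lorentzInner, dotProduct, mul_assoc]

lemma lorentzInner_sum_smul {κ : Type*} (s : Finset ι) (t : Finset κ) (a : ι → ℝ) (b : κ → ℝ)
    (x : ι → Fin (d + 1) → ℝ) (y : κ → Fin (d + 1) → ℝ) :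
    lorentzInner (∑ i ∈ s, a i • x i) (∑ j ∈ t, b j • y j) =
      ∑ i ∈ s, ∑ j ∈ t, a i * b j * lorentzInner (x i) (y j) := by
  rw [lorentzInner_eq_dotProduct, sum_dotProduct]
  simp only [dotProduct_sum, smul_dotProduct, dotProduct_smul, Finset.sum_apply, Pi.smul_apply,
    smul_eq_mul, Finset.sum_mul_sum]
  simp only [Finset.mul_sum, ← Finset.sum_sub_distrib, lorentzInner_eq_dotProduct]
  exact Finset.sum_congr rfl fun i _ => Finset.sum_congr rfl fun j _ => by ring

lemma mul_lorentzInner_sum_smul_self_sub (K : ℝ) (s : Finset ι) (w : ι → ℝ)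
    (x : ι → Fin (d + 1) → ℝ) :
    K * lorentzInner (∑ i ∈ s, w i • x i) (∑ i ∈ s, w i • x i) - (∑ i ∈ s, w i) ^ 2 =
      ∑ p ∈ s ×ˢ s, w p.1 * w p.2 * (K * lorentzInner (x p.1) (x p.2) - 1) := by
  rw [lorentzInner_sum_smul, sq, Finset.sum_mul_sum, Finset.sum_product]
  simp only [Finset.mul_sum, ← Finset.sum_sub_distrib]
  exact Finset.sum_congr rfl fun i _ => Finset.sum_congr rfl fun j _ => by ring

/-- The summand `i = 0` vanishes, so only the spatial coordinates contribute. -/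
lemma sum_sq_sub_eq_lorentzInner (x y : Fin (d + 1) → ℝ) :
    ∑ i, (y 0 * x i - x 0 * y i) ^ 2 =
      y 0 ^ 2 * lorentzInner x x + x 0 ^ 2 * lorentzInner y y -
        2 * x 0 * y 0 * lorentzInner x y := by
  have expand : ∑ i, (y 0 * x i - x 0 * y i) ^ 2 =
      y 0 ^ 2 * ∑ i, x i * x i + x 0 ^ 2 * ∑ i, y i * y i - 2 * x 0 * y 0 * ∑ i, x i * y i := by
    simp only [Finset.mul_sum, ← Finset.sum_sub_distrib, ← Finset.sum_add_distrib]
    exact Finset.sum_congr rfl fun i _ => by ring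
  rw [expand]
  unfold lorentzInner
  ring

end Bilinearity

namespace onHyperboloid

variable {d : ℕ} {K : ℝ} {x y : Fin (d + 1) → ℝ}

lemma mul_lorentzInner_self (hK : K ≠ 0) (hx : onHyperboloid K x) :
    K * lorentzInner x x = 1 := by
  rw [hx.1, mul_one_div_cancel hK]

lemma mul_mul_lorentzInner_sub_one (hK : K ≠ 0) (hx : onHyperboloid K x)
    (hy : onHyperboloid K y) :
    2 * x 0 * y 0 * (K * lorentzInner x y - 1) =
      (x 0 - y 0) ^ 2 + -K * ∑ i, (y 0 * x i - x 0 * y i) ^ 2 := by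
  rw [sum_sq_sub_eq_lorentzInner]
  linear_combination y 0 ^ 2 * hx.mul_lorentzInner_self hK + x 0 ^ 2 * hy.mul_lorentzInner_self hK

theorem one_le_mul_lorentzInner (hK : K < 0) (hx : onHyperboloid K x) (hy : onHyperboloid K y) :
    1 ≤ K * lorentzInner x y := by
  have weight_pos : 0 < 2 * x 0 * y 0 := mul_pos (mul_pos two_pos hx.2) hy.2
  rw [← sub_nonneg, ← mul_nonneg_iff_of_pos_left weight_pos,
    hx.mul_mul_lorentzInner_sub_one hK.ne hy]
  have neg_K_nonneg : 0 ≤ -K := neg_nonneg.2 hK.le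
  positivity

theorem mul_lorentzInner_eq_one_iff (hK : K < 0) (hx : onHyperboloid K x)
    (hy : onHyperboloid K y) : K * lorentzInner x y = 1 ↔ x = y := by
  refine ⟨fun h => ?_, fun h => h ▸ hx.mul_lorentzInner_self hK.ne⟩
  have spatial_nonneg : 0 ≤ ∑ i, (y 0 * x i - x 0 * y i) ^ 2 := by positivity
  have squares_eq_zero : (x 0 - y 0) ^ 2 + -K * ∑ i, (y 0 * x i - x 0 * y i) ^ 2 = 0 := by
    rw [← hx.mul_mul_lorentzInner_sub_one hK.ne hy, h, sub_self, mul_zero]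
  obtain ⟨time_sq, spatial_sq⟩ := (add_eq_zero_iff_of_nonneg (sq_nonneg _)
    (mul_nonneg (neg_nonneg.2 hK.le) spatial_nonneg)).1 squares_eq_zero
  have time_eq : x 0 = y 0 := sub_eq_zero.1 (sq_eq_zero_iff.1 time_sq)
  have spatial_eq : ∀ i ∈ Finset.univ, (y 0 * x i - x 0 * y i) ^ 2 = 0 :=
    (Finset.sum_eq_zero_iff_of_nonneg fun i _ => sq_nonneg _).1
      ((mul_eq_zero_iff_left (neg_ne_zero.2 hK.ne)).1 spatial_sq)
  funext i
  have proportional : y 0 * x i = x 0 * y i :=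
    sub_eq_zero.1 (sq_eq_zero_iff.1 (spatial_eq i (Finset.mem_univ i)))
  rw [time_eq] at proportional
  exact mul_left_cancel₀ hy.2.ne' proportional

end onHyperboloid

section ConvexCombination

variable {d : ℕ} {K : ℝ} {ι : Type*} {s : Finset ι} {w : ι → ℝ} {x : ι → Fin (d + 1) → ℝ}

lemma weights_mul_lorentzInner_sub_one_nonneg (hK : K < 0) (hw : ∀ i ∈ s, 0 ≤ w i)
    (hx : ∀ i ∈ s, onHyperboloid K (x i)) (p : ι × ι) (hp : p ∈ s ×ˢ s) :
    0 ≤ w p.1 * w p.2 * (K * lorentzInner (x p.1) (x p.2) - 1) := by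
  obtain ⟨hi, hj⟩ := Finset.mem_product.1 hp
  exact mul_nonneg (mul_nonneg (hw _ hi) (hw _ hj))
    (sub_nonneg.2 ((hx _ hi).one_le_mul_lorentzInner hK (hx _ hj)))

theorem sq_sum_le_mul_lorentzInner_sum_smul (hK : K < 0) (hw : ∀ i ∈ s, 0 ≤ w i)
    (hx : ∀ i ∈ s, onHyperboloid K (x i)) :
    (∑ i ∈ s, w i) ^ 2 ≤ K * lorentzInner (∑ i ∈ s, w i • x i) (∑ i ∈ s, w i • x i) := by
  rw [← sub_nonneg, mul_lorentzInner_sum_smul_self_sub]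
  exact Finset.sum_nonneg (weights_mul_lorentzInner_sub_one_nonneg hK hw hx)

theorem mul_lorentzInner_sum_smul_eq_sq_sum_iff (hK : K < 0) (hw : ∀ i ∈ s, 0 < w i)
    (hx : ∀ i ∈ s, onHyperboloid K (x i)) :
    K * lorentzInner (∑ i ∈ s, w i • x i) (∑ i ∈ s, w i • x i) = (∑ i ∈ s, w i) ^ 2 ↔
      ∀ i ∈ s, ∀ j ∈ s, x i = x j := by
  have excess_eq_zero_iff : ∀ i ∈ s, ∀ j ∈ s,
      w i * w j * (K * lorentzInner (x i) (x j) - 1) = 0 ↔ x i = x j := fun i hi j hj => by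
    rw [mul_eq_zero_iff_left (mul_pos (hw i hi) (hw j hj)).ne', sub_eq_zero,
      (hx i hi).mul_lorentzInner_eq_one_iff hK (hx j hj)]
  rw [← sub_eq_zero, mul_lorentzInner_sum_smul_self_sub,
    Finset.sum_eq_zero_iff_of_nonneg
      (weights_mul_lorentzInner_sub_one_nonneg hK (fun i hi => (hw i hi).le) hx)]
  simp only [Prod.forall, Finset.mem_product, and_imp]
  exact ⟨fun h i hi j hj => (excess_eq_zero_iff i hi j hj).1 (h i j hi hj),
    fun h i j hi hj => (excess_eq_zero_iff i hi j hj).2 (h i hi j hj)⟩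

theorem euclidean_mean_projectable_general (hK : K < 0) (hw : ∀ i ∈ s, 0 < w i)
    (hw_sum : ∑ i ∈ s, w i = 1) (hx : ∀ i ∈ s, onHyperboloid K (x i)) :
    1 ≤ K * lorentzInner (∑ i ∈ s, w i • x i) (∑ i ∈ s, w i • x i) ∧
    (K * lorentzInner (∑ i ∈ s, w i • x i) (∑ i ∈ s, w i • x i) = 1 ↔
      ∀ i ∈ s, ∀ j ∈ s, x i = x j) ∧
    lorentzInner (∑ i ∈ s, w i • x i) (∑ i ∈ s, w i • x i) < 0 ∧
    0 < (∑ i ∈ s, w i • x i) 0 := by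
  have one_le : 1 ≤ K * lorentzInner (∑ i ∈ s, w i • x i) (∑ i ∈ s, w i • x i) := by
    simpa [hw_sum] using sq_sum_le_mul_lorentzInner_sum_smul hK (fun i hi => (hw i hi).le) hx
  have nonempty : s.Nonempty := Finset.nonempty_of_sum_ne_zero (hw_sum ▸ one_ne_zero)
  refine ⟨one_le, ?_, neg_of_mul_pos_right (one_pos.trans_le one_le) hK.le, ?_⟩
  · simpa [hw_sum] using mul_lorentzInner_sum_smul_eq_sq_sum_iff hK hw hx
  · simpa using Finset.sum_pos (fun i hi => mul_pos (hw i hi) (hx i hi).2) nonempty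

end ConvexCombination

/-- The Euclidean mean x̄ of hyperboloid points satisfies K·⟨x̄,x̄⟩_L ≥ 1
(equality iff all points are identical); in particular ⟨x̄,x̄⟩_L < 0 and x̄₀ > 0,
so x̄ is projectable onto the hyperboloid. -/
theorem euclidean_mean_projectable {d n : ℕ} {K : ℝ} (hK : K < 0) (hn : 2 ≤ n)
    {x : Fin n → Fin (d + 1) → ℝ} (hx : ∀ i, onHyperboloid K (x i)) :
    1 ≤ K * lorentzInner ((n : ℝ)⁻¹ • ∑ i, x i) ((n : ℝ)⁻¹ • ∑ i, x i) ∧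
    (K * lorentzInner ((n : ℝ)⁻¹ • ∑ i, x i) ((n : ℝ)⁻¹ • ∑ i, x i) = 1 ↔
      ∀ i j, x i = x j) ∧
    lorentzInner ((n : ℝ)⁻¹ • ∑ i, x i) ((n : ℝ)⁻¹ • ∑ i, x i) < 0 ∧
    0 < ((n : ℝ)⁻¹ • ∑ i, x i) 0 := by
  rw [Finset.smul_sum]
  simpa using euclidean_mean_projectable_general (s := Finset.univ)
    (w := fun _ => (n : ℝ)⁻¹) hK (fun _ _ => by positivity) (by simp [show n ≠ 0 by lia])
    fun i _ => hx i
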